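/- Let (T, ρ) be a continuum tree equipped with a finite Borel measure λ. Let x, y ∈ T be distinct, set ℓ = ρ(x,y), let δ ∈ (0, ℓ), and let z₀ and z₁ be the unique points of [[x,y]] with ρ(x,z₀) = δ/2 and ρ(x,z₁) = 3δ/4. Then ∫_{B_δ(x)} ρ(σ,y) dλ(σ) ≥ λ(B_δ(x))·ℓ + (δ/4)·(2·λ(O_δ(x,y) ∖ O_{δ/2}(x,y)) + λ(O_{δ/2}(z₀,y) ∖ O_{δ/4}(z₀,y))) − (δ/2)·(λ(B_{δ/2}(z₀) ∖ B_{δ/4}(z₁)) + 2·λ(B_{δ/4}(z₁))). -/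

import Mathlib

/-- A continuum tree: a compact metric space in which, for all `x y`, there is a
unique isometric parametrisation `[0, dist x y] → T` from `x` to `y`, and the image
of every injective continuous path from `x` to `y` equals the image of this geodesic. -/
structure ContinuumTree (T : Type*) [MetricSpace T] [CompactSpace T] where
  geodesic : T → T → ℝ → T
  geodesic_isometry : ∀ x y : T, ∀ s ∈ Set.Icc (0 : ℝ) (dist x y),
    ∀ t ∈ Set.Icc (0 : ℝ) (dist x y),
      dist (geodesic x y s) (geodesic x y t) = |s - t|
  geodesic_source : ∀ x y : T, geodesic x y 0 = x
  geodesic_target : ∀ x y : T, geodesic x y (dist x y) = y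
  geodesic_unique : ∀ x y : T, ∀ γ : ℝ → T,
    (∀ s ∈ Set.Icc (0 : ℝ) (dist x y), ∀ t ∈ Set.Icc (0 : ℝ) (dist x y),
      dist (γ s) (γ t) = |s - t|) →
    γ 0 = x → γ (dist x y) = y →
    Set.EqOn γ (geodesic x y) (Set.Icc 0 (dist x y))
  path_image : ∀ x y : T, ∀ γ : Path x y, Function.Injective ⇑γ →
    Set.range ⇑γ = geodesic x y '' Set.Icc 0 (dist x y)

/-- The geodesic segment `[[x,y]]`: the image of the unique geodesic from `x` to `y`. -/
def ContinuumTree.seg {T : Type*} [MetricSpace T] [CompactSpace T]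
    (ct : ContinuumTree T) (x y : T) : Set T :=
  ct.geodesic x y '' Set.Icc 0 (dist x y)

/-- The offspring part `O_δ(x,y) = B_δ(x) ∩ (T ∖ T^x(y))` of the ball `B_δ(x)` relative
to `y`, where `T^x(y)` is the connected component of `T ∖ {x}` containing `y`. -/
def offspringPart {T : Type*} [MetricSpace T] (δ : ℝ) (x y : T) : Set T :=
  Metric.ball x δ ∩ (connectedComponentIn {x}ᶜ y)ᶜ

/-!
The geodesic triangles of a continuum tree are tripods: `[[x,y]] ⊆ [[x,s]] ∪ [[s,y]]`. Hence, if
`z ∈ [[x,y]]`, a point `s` with `ρ(s,x) < 2ρ(x,z)` and `ρ(s,z) ≥ ρ(x,z)` cannot branch off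
`[[x,y]]` beyond `z`, so it is at least as far from `y` as `x` is; if `s` is outside the component
of `y` in `T ∖ {x}`, then even `ρ(s,y) = ρ(s,x) + ρ(x,y)`. Integrating both facts bounds the
integral of `ρ(·,y)` over a ball about `x` below by an explicit term plus the integral over a
smaller ball about `z`. Apply this to `B_δ(x) ⊇ B_{δ/2}(z₀)` and to `B_{δ/2}(z₀) ⊇ B_{δ/4}(z₁)`,
and use `ρ(·,y) ≥ ρ(x,y) - δ` on the last ball.
-/

open MeasureTheory Metric Set

theorem mul_coe_unitInterval_mem_Icc {a : ℝ} (ha : 0 ≤ a) (u : unitInterval) :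
    a * u ∈ Icc 0 a :=
  ⟨mul_nonneg ha u.2.1, mul_le_of_le_one_right ha u.2.2⟩

theorem injective_path_trans {X : Type*} [TopologicalSpace X] {x m y : X} {p : Path x m}
    {q : Path m y} (hp : Function.Injective p) (hq : Function.Injective q)
    (hpq : range p ∩ range q ⊆ {m}) : Function.Injective (p.trans q) := by
  have meet {u v : unitInterval} (h : p u = q v) : v = 0 := by
    have hm : p u = m := hpq ⟨mem_range_self u, h ▸ mem_range_self v⟩
    exact hq (h.symm.trans (hm.trans q.source.symm))
  intro s t hst
  rw [Path.trans_apply, Path.trans_apply] at hst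
  split_ifs at hst with hs ht ht
  · have := congrArg Subtype.val (hp hst)
    exact Subtype.ext (by simpa using this)
  · have := congrArg Subtype.val (meet hst)
    simp only [Icc.coe_zero] at this
    linarith
  · have := congrArg Subtype.val (meet hst.symm)
    simp only [Icc.coe_zero] at this
    linarith
  · have := congrArg Subtype.val (hq hst)
    exact Subtype.ext (by simpa using this)

theorem mul_measureReal_add_mul_measureReal_le_setIntegral {X : Type*} [MeasurableSpace X]
    {μ : Measure X} {A S : Set X} {f : X → ℝ} {c d : ℝ} (hS : MeasurableSet S)
    (hA : MeasurableSet A) (hAS : A ⊆ S) (hμS : μ S ≠ ⊤) (hf : IntegrableOn f S μ)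
    (hfS : ∀ s ∈ S, c ≤ f s) (hfA : ∀ s ∈ A, c + d ≤ f s) :
    c * μ.real S + d * μ.real A ≤ ∫ s in S, f s ∂μ := by
  have on_sdiff : c * μ.real (S \ A) ≤ ∫ s in S \ A, f s ∂μ :=
    setIntegral_ge_of_const_le_real (hS.diff hA) (measure_ne_top_of_subset sdiff_subset hμS)
      (fun s hs => hfS s hs.1) (hf.mono_set sdiff_subset)
  have on_A : (c + d) * μ.real A ≤ ∫ s in A, f s ∂μ :=
    setIntegral_ge_of_const_le_real hA (measure_ne_top_of_subset hAS hμS) hfA (hf.mono_set hAS)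
  rw [measureReal_sdiff hAS hA hμS, setIntegral_sdiff hA hf hAS] at on_sdiff
  linarith

theorem integrable_dist_of_compactSpace {X : Type*} [PseudoMetricSpace X] [CompactSpace X]
    [MeasurableSpace X] [OpensMeasurableSpace X] (μ : Measure X) [IsFiniteMeasureOnCompacts μ]
    (y : X) : Integrable (fun s => dist s y) μ :=
  Continuous.integrable_of_hasCompactSupport (by fun_prop) (.of_compactSpace _)

namespace ContinuumTree

variable {T : Type*} [MetricSpace T] [CompactSpace T] {x y z : T}

section Segments

variable (ct : ContinuumTree T)

theorem continuousOn_geodesic (x y : T) :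
    ContinuousOn (ct.geodesic x y) (Icc 0 (dist x y)) :=
  (LipschitzOnWith.of_dist_le_mul (K := 1) fun s hs t ht => by
    rw [ct.geodesic_isometry x y s hs t ht, NNReal.coe_one, one_mul, Real.dist_eq]).continuousOn

theorem left_mem_seg (x y : T) : x ∈ ct.seg x y :=
  ⟨0, left_mem_Icc.2 dist_nonneg, ct.geodesic_source x y⟩

theorem right_mem_seg (x y : T) : y ∈ ct.seg x y :=
  ⟨dist x y, right_mem_Icc.2 dist_nonneg, ct.geodesic_target x y⟩

theorem isPreconnected_seg (x y : T) : IsPreconnected (ct.seg x y) :=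
  isPreconnected_Icc.image _ (ct.continuousOn_geodesic x y)

theorem isCompact_seg (x y : T) : IsCompact (ct.seg x y) :=
  isCompact_Icc.image_of_continuousOn (ct.continuousOn_geodesic x y)

theorem dist_left_geodesic {t : ℝ} (ht : t ∈ Icc 0 (dist x y)) :
    dist x (ct.geodesic x y t) = t := by
  have h := ct.geodesic_isometry x y 0 (left_mem_Icc.2 dist_nonneg) t ht
  rwa [ct.geodesic_source, zero_sub, abs_neg, abs_of_nonneg ht.1] at h

theorem dist_geodesic_right {t : ℝ} (ht : t ∈ Icc 0 (dist x y)) :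
    dist (ct.geodesic x y t) y = dist x y - t := by
  have h := ct.geodesic_isometry x y t ht (dist x y) (right_mem_Icc.2 dist_nonneg)
  rwa [ct.geodesic_target, abs_sub_comm, abs_of_nonneg (sub_nonneg.2 ht.2)] at h

theorem dist_add_dist_of_mem_seg (hz : z ∈ ct.seg x y) : dist x z + dist z y = dist x y := by
  obtain ⟨t, ht, rfl⟩ := hz
  rw [ct.dist_left_geodesic ht, ct.dist_geodesic_right ht, add_sub_cancel]

theorem seg_geodesic_geodesic {a b : ℝ} (ha : 0 ≤ a) (hab : a ≤ b) (hb : b ≤ dist x y) :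
    ct.seg (ct.geodesic x y a) (ct.geodesic x y b) = ct.geodesic x y '' Icc a b := by
  have dist_eq : dist (ct.geodesic x y a) (ct.geodesic x y b) = b - a := by
    rw [ct.geodesic_isometry x y a ⟨ha, hab.trans hb⟩ b ⟨ha.trans hab, hb⟩, abs_sub_comm,
      abs_of_nonneg (sub_nonneg.2 hab)]
  have shift_eqOn := ct.geodesic_unique (ct.geodesic x y a) (ct.geodesic x y b)
    (fun t => ct.geodesic x y (a + t)) (by
      rw [dist_eq]
      rintro s ⟨hs0, hs⟩ t ⟨ht0, ht⟩
      rw [ct.geodesic_isometry x y _ ⟨by linarith, by linarith⟩ _ ⟨by linarith, by linarith⟩,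
        add_sub_add_left_eq_sub])
    (by rw [add_zero]) (by rw [dist_eq, add_sub_cancel])
  rw [seg, ← shift_eqOn.image_eq, dist_eq, ← image_image, image_const_add_Icc, add_zero,
    add_sub_cancel]

theorem seg_geodesic_right {t : ℝ} (ht : t ∈ Icc 0 (dist x y)) :
    ct.seg (ct.geodesic x y t) y = ct.geodesic x y '' Icc t (dist x y) := by
  have h := ct.seg_geodesic_geodesic ht.1 ht.2 le_rfl
  rwa [ct.geodesic_target] at h

theorem seg_left_subset (hz : z ∈ ct.seg x y) : ct.seg x z ⊆ ct.seg x y := by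
  obtain ⟨t, ht, rfl⟩ := hz
  have h := ct.seg_geodesic_geodesic le_rfl ht.1 ht.2
  rw [ct.geodesic_source] at h
  exact h.trans_subset (image_mono (Icc_subset_Icc_right ht.2))

theorem seg_right_subset (hz : z ∈ ct.seg x y) : ct.seg z y ⊆ ct.seg x y := by
  obtain ⟨t, ht, rfl⟩ := hz
  exact (ct.seg_geodesic_right ht).trans_subset (image_mono (Icc_subset_Icc_left ht.1))

theorem mem_seg_right_of_dist_le {w : T} (hz : z ∈ ct.seg x y) (hw : w ∈ ct.seg x y)
    (hzw : dist x z ≤ dist x w) : w ∈ ct.seg z y := by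
  obtain ⟨s, hs, rfl⟩ := hz
  obtain ⟨t, ht, rfl⟩ := hw
  rw [ct.dist_left_geodesic hs, ct.dist_left_geodesic ht] at hzw
  rw [ct.seg_geodesic_right hs]
  exact mem_image_of_mem _ ⟨hzw, ht.2⟩

/-- The geodesic from `x` to `y` as a `Path`, that is, reparametrised proportionally to the unit
interval; this is the form in which `ContinuumTree.path_image` speaks about arcs. -/
noncomputable def geodesicPath (x y : T) : Path x y where
  toFun u := ct.geodesic x y (dist x y * u)
  continuous_toFun := (ct.continuousOn_geodesic x y).comp_continuous (by fun_prop)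
    (mul_coe_unitInterval_mem_Icc dist_nonneg)
  source' := by rw [Icc.coe_zero, mul_zero, ct.geodesic_source]
  target' := by rw [Icc.coe_one, mul_one, ct.geodesic_target]

theorem range_geodesicPath (x y : T) : range (ct.geodesicPath x y) = ct.seg x y := by
  have h : (dist x y * ·) '' Icc 0 1 = Icc 0 (dist x y) := by
    rw [image_mul_left_Icc dist_nonneg zero_le_one, mul_zero, mul_one]
  rw [seg, ← h, image_image, image_eq_range]
  rfl

theorem geodesicPath_injective (hxy : x ≠ y) : Function.Injective (ct.geodesicPath x y) := by
  intro u v huv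
  have h : dist x y * u = dist x y * v := by
    rw [← ct.dist_left_geodesic (mul_coe_unitInterval_mem_Icc dist_nonneg u),
      ← ct.dist_left_geodesic (mul_coe_unitInterval_mem_Icc dist_nonneg v)]
    exact congrArg (dist x) huv
  exact Subtype.ext (mul_left_cancel₀ (dist_ne_zero.2 hxy) h)

theorem seg_eq_union_of_inter_subset {m : T} (h : ct.seg x m ∩ ct.seg m y ⊆ {m}) :
    ct.seg x y = ct.seg x m ∪ ct.seg m y := by
  rcases eq_or_ne x m with rfl | hxm
  · exact (union_eq_right.2 (ct.seg_left_subset (ct.left_mem_seg x y))).symm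
  rcases eq_or_ne m y with rfl | hmy
  · exact (union_eq_left.2 (ct.seg_right_subset (ct.right_mem_seg x m))).symm
  rw [← ct.range_geodesicPath x m, ← ct.range_geodesicPath m y] at h ⊢
  rw [← Path.trans_range, ct.path_image x y _ (injective_path_trans
    (ct.geodesicPath_injective hxm) (ct.geodesicPath_injective hmy) h), seg]

/-- The branch point `m` of the tripod is the point common to `[[x,s]]` and `[[s,y]]` that is
closest to `x`. -/
theorem exists_mem_seg_inter_subset_singleton (x s y : T) :
    ∃ m ∈ ct.seg x s ∩ ct.seg s y, ct.seg x m ∩ ct.seg m y ⊆ {m} := by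
  obtain ⟨m, hm, hmin⟩ := ((ct.isCompact_seg x s).inter (ct.isCompact_seg s y)).exists_isMinOn
    ⟨s, ct.right_mem_seg x s, ct.left_mem_seg s y⟩ (f := dist x) (by fun_prop)
  refine ⟨m, hm, fun w ⟨hxw, hwy⟩ => ?_⟩
  have hle : dist x m ≤ dist x w := hmin ⟨ct.seg_left_subset hm.1 hxw, ct.seg_right_subset hm.2 hwy⟩
  have hadd := ct.dist_add_dist_of_mem_seg hxw
  exact dist_le_zero.1 (by linarith)

theorem seg_subset_union_seg (x s y : T) : ct.seg x y ⊆ ct.seg x s ∪ ct.seg s y := by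
  obtain ⟨m, ⟨hxs, hsy⟩, hm⟩ := ct.exists_mem_seg_inter_subset_singleton x s y
  rw [ct.seg_eq_union_of_inter_subset hm]
  exact union_subset_union (ct.seg_left_subset hxs) (ct.seg_right_subset hsy)

theorem dist_sub_dist_add_le_dist {s : T} {r : ℝ} (hz : z ∈ ct.seg x y)
    (hsx : dist s x < dist x z + r) (hsz : r ≤ dist s z) :
    dist x y - dist x z + r ≤ dist s y := by
  have hadd := ct.dist_add_dist_of_mem_seg hz
  rcases ct.seg_subset_union_seg x s y hz with hxs | hsy
  · have := ct.dist_add_dist_of_mem_seg hxs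
    rw [dist_comm z s, dist_comm x s] at this
    linarith
  · have := ct.dist_add_dist_of_mem_seg hsy
    linarith

end Segments

theorem dist_add_dist_of_notMem_connectedComponentIn (ct : ContinuumTree T) {s : T}
    (hs : s ∉ connectedComponentIn {x}ᶜ y) : dist s x + dist x y = dist s y := by
  refine ct.dist_add_dist_of_mem_seg (of_not_not fun hx => hs ?_)
  exact (ct.isPreconnected_seg s y).subset_connectedComponentIn (ct.right_mem_seg s y)
    (subset_compl_singleton_iff.2 hx) (ct.left_mem_seg s y)

theorem isPreconnected_ball (ct : ContinuumTree T) (x : T) (r : ℝ) :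
    IsPreconnected (ball x r) := by
  refine isPreconnected_of_forall x fun y hy =>
    ⟨ct.seg x y, fun w hw => ?_, ct.left_mem_seg x y, ct.right_mem_seg x y,
      ct.isPreconnected_seg x y⟩
  rw [mem_ball'] at hy ⊢
  linarith [ct.dist_add_dist_of_mem_seg hw, dist_nonneg (x := w) (y := y)]

theorem locallyConnectedSpace (ct : ContinuumTree T) : LocallyConnectedSpace T :=
  locallyConnectedSpace_of_connected_bases _ _ (fun _ => nhds_basis_ball)
    fun x r _ => ct.isPreconnected_ball x r

theorem measurableSet_offspringPart [MeasurableSpace T] [OpensMeasurableSpace T]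
    (ct : ContinuumTree T) (r : ℝ) (x y : T) : MeasurableSet (offspringPart r x y) :=
  have := ct.locallyConnectedSpace
  measurableSet_ball.inter isOpen_compl_singleton.connectedComponentIn.measurableSet.compl

theorem add_le_dist_of_mem_offspringPart_sdiff (ct : ContinuumTree T) {R r : ℝ} {s : T}
    (hs : s ∈ offspringPart R x y \ offspringPart r x y) : dist x y + r ≤ dist s y := by
  have hadd := ct.dist_add_dist_of_notMem_connectedComponentIn hs.1.2
  have hr : r ≤ dist s x := not_lt.1 fun hlt => hs.2 ⟨hlt, hs.1.2⟩
  linarith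

theorem offspringPart_sdiff_subset_ball_sdiff_ball (ct : ContinuumTree T) {R r : ℝ}
    (hz : z ∈ ct.seg x y) :
    offspringPart R x y \ offspringPart r x y ⊆ ball x R \ ball z r := by
  refine fun s hs => ⟨hs.1.1, fun hsz => ?_⟩
  have := ct.add_le_dist_of_mem_offspringPart_sdiff hs
  rw [mem_ball] at hsz
  linarith [dist_triangle s z y, ct.dist_add_dist_of_mem_seg hz, dist_nonneg (x := x) (y := z)]

theorem add_setIntegral_ball_le_setIntegral_ball [MeasurableSpace T] [OpensMeasurableSpace T]
    (ct : ContinuumTree T) (lam : Measure T) [IsFiniteMeasure lam] {R r : ℝ}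
    (hz : z ∈ ct.seg x y) (hzr : dist x z ≤ r) (hR : dist x z + r = R) :
    dist x y * (lam.real (ball x R) - lam.real (ball z r))
        + r * lam.real (offspringPart R x y \ offspringPart r x y)
        + ∫ s in ball z r, dist s y ∂lam
      ≤ ∫ s in ball x R, dist s y ∂lam := by
  have hball : ball z r ⊆ ball x R := ball_subset_ball' (by rw [dist_comm, add_comm, hR])
  have hint := integrable_dist_of_compactSpace lam y
  have dist_ge : ∀ s ∈ ball x R \ ball z r, dist x y ≤ dist s y := fun s ⟨hsx, hsz⟩ => by
    linarith [ct.dist_sub_dist_add_le_dist hz (hR ▸ mem_ball.1 hsx) (not_lt.1 hsz)]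
  have on_sdiff := mul_measureReal_add_mul_measureReal_le_setIntegral (μ := lam)
    (measurableSet_ball.diff measurableSet_ball)
    ((ct.measurableSet_offspringPart R x y).diff (ct.measurableSet_offspringPart r x y))
    (ct.offspringPart_sdiff_subset_ball_sdiff_ball hz) (measure_ne_top lam _) hint.integrableOn
    dist_ge fun _ => ct.add_le_dist_of_mem_offspringPart_sdiff
  rw [measureReal_sdiff hball measurableSet_ball,
    setIntegral_sdiff measurableSet_ball hint.integrableOn hball] at on_sdiff
  linarith

end ContinuumTree

theorem stmt_13_general {T : Type*} [MetricSpace T] [CompactSpace T] [MeasurableSpace T]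
    [OpensMeasurableSpace T] (ct : ContinuumTree T) (lam : Measure T) [IsFiniteMeasure lam]
    {x y : T} {δ : ℝ} {z₀ z₁ : T} (hz₀ : z₀ ∈ ct.seg x y) (hz₀d : dist x z₀ = δ / 2)
    (hz₁ : z₁ ∈ ct.seg x y) (hz₁d : dist x z₁ = 3 * δ / 4) :
    lam.real (ball x δ) * dist x y
        + (δ / 4) * (2 * lam.real (offspringPart δ x y \ offspringPart (δ / 2) x y)
            + lam.real (offspringPart (δ / 2) z₀ y \ offspringPart (δ / 4) z₀ y))
        - (δ / 2) * (lam.real (ball z₀ (δ / 2) \ ball z₁ (δ / 4))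
            + 2 * lam.real (ball z₁ (δ / 4)))
      ≤ ∫ σ in ball x δ, dist σ y ∂lam := by
  have hz₀y : dist z₀ y = dist x y - δ / 2 := by linarith [ct.dist_add_dist_of_mem_seg hz₀]
  have hz₁y : dist z₁ y = dist x y - 3 * δ / 4 := by linarith [ct.dist_add_dist_of_mem_seg hz₁]
  have hz₀z₁ : z₁ ∈ ct.seg z₀ y :=
    ct.mem_seg_right_of_dist_le hz₀ hz₁ (by linarith [dist_nonneg (x := x) (y := z₀)])
  have hz₀z₁d : dist z₀ z₁ = δ / 4 := by linarith [ct.dist_add_dist_of_mem_seg hz₀z₁]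
  have step₀ := ct.add_setIntegral_ball_le_setIntegral_ball lam (R := δ) hz₀ hz₀d.le (by linarith)
  have step₁ := ct.add_setIntegral_ball_le_setIntegral_ball lam (R := δ / 2) hz₀z₁ hz₀z₁d.le
    (by linarith)
  have last_ball : (dist x y - δ) * lam.real (ball z₁ (δ / 4))
      ≤ ∫ s in ball z₁ (δ / 4), dist s y ∂lam :=
    setIntegral_ge_of_const_le_real measurableSet_ball (measure_ne_top lam _)
      (fun s hs => by linarith [dist_triangle_left z₁ y s, mem_ball.1 hs])
      (integrable_dist_of_compactSpace lam y).integrableOn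
  have hball : ball z₁ (δ / 4) ⊆ ball z₀ (δ / 2) :=
    ball_subset_ball' (by linarith [dist_comm z₀ z₁])
  rw [hz₀y] at step₁
  rw [measureReal_sdiff hball measurableSet_ball]
  linarith

open MeasureTheory in
/-- The twice-iterated lower bound for `∫_{B_δ(x)} ρ(σ,y) dλ(σ)` in a continuum tree. -/
theorem stmt_13 {T : Type*} [MetricSpace T] [CompactSpace T]
    [MeasurableSpace T] [BorelSpace T] (ct : ContinuumTree T)
    (lam : Measure T) [IsFiniteMeasure lam]
    {x y : T} (hxy : x ≠ y) {δ : ℝ} (hδ0 : 0 < δ) (hδℓ : δ < dist x y)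
    {z₀ z₁ : T} (hz₀ : z₀ ∈ ct.seg x y) (hz₀d : dist x z₀ = δ / 2)
    (hz₁ : z₁ ∈ ct.seg x y) (hz₁d : dist x z₁ = 3 * δ / 4) :
    (lam (Metric.ball x δ)).toReal * dist x y
        + (δ / 4) * (2 * (lam (offspringPart δ x y \ offspringPart (δ / 2) x y)).toReal
            + (lam (offspringPart (δ / 2) z₀ y \ offspringPart (δ / 4) z₀ y)).toReal)
        - (δ / 2) * ((lam (Metric.ball z₀ (δ / 2) \ Metric.ball z₁ (δ / 4))).toReal
            + 2 * (lam (Metric.ball z₁ (δ / 4))).toReal)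
      ≤ ∫ σ in Metric.ball x δ, dist σ y ∂lam := by
  exact stmt_13_general ct lam hz₀ hz₀d hz₁ hz₁d
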